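/- For every delayable learning restriction δ, the collection of classes of languages learnable with full information from canonical informants equals the collection learnable set-drivenly from arbitrary informants: [Inf_can G δ] = [Inf Sd δ]. -/

import Mathlib

open Filter Classical

namespace InfBc

/-! ### Basic notions: r.e. sets, informants, learners -/

/-- The `e`-th recursively enumerable set (via an acceptable numbering of
partial computable functions, `W e = dom φ_e`). -/
def W (e : ℕ) : Set ℕ := {x | ((Denumerable.ofNat Nat.Partrec.Code e).eval x).Dom}

/-- A language is recursively enumerable. -/
def RE (L : Set ℕ) : Prop := ∃ e, W e = L

abbrev Datum := ℕ × Bool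
abbrev Seq := List Datum
abbrev Informant := ℕ → Datum
abbrev HypSeq := ℕ → Part ℕ
/-- Learners are partial functions; all input types are coded into `ℕ`. -/
abbrev Learner := ℕ →. ℕ
abbrev Restriction := HypSeq → Informant → Prop

/-- Positive information of an infinite sequence. -/
def posI (I : Informant) : Set ℕ := {x | ∃ n, I n = (x, true)}
/-- Negative information of an infinite sequence. -/
def negI (I : Informant) : Set ℕ := {x | ∃ n, I n = (x, false)}

/-- `I` is an informant for the language `L`. -/
def IsInformant (I : Informant) (L : Set ℕ) : Prop := posI I = L ∧ negI I = Lᶜ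

/-- `I` is an informant (for some language), i.e. `I ∈ Inf`. -/
def IsInf (I : Informant) : Prop := IsInformant I (posI I)

/-- `I` is a canonical informant. -/
def Canonical (I : Informant) : Prop := ∀ x, I x = (x, true) ∨ I x = (x, false)

/-- `I[n]`, the length-`n` initial segment of `I`. -/
def segment (I : Informant) (n : ℕ) : Seq := (List.range n).map I

/-- Positive information of a finite sequence. -/
def posS (σ : Seq) : Set ℕ := {x | (x, true) ∈ σ}
/-- Negative information of a finite sequence. -/
def negS (σ : Seq) : Set ℕ := {x | (x, false) ∈ σ}
/-- The content of a finite sequence, as a set. -/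
def contentS (σ : Seq) : Set Datum := {a | a ∈ σ}

/-! ### Interaction operators -/

abbrev InteractionOperator := Learner → Informant → HypSeq

/-- Full-information (Gold-style) interaction: `G(h,I)(i) = h(I[i])`. -/
def Gop : InteractionOperator := fun h I i => h (Encodable.encode (segment I i))

/-- Set-driven interaction: `Sd(h,I)(i) = h(content(I[i]))`. -/
def Sdop : InteractionOperator := fun h I i => h (Encodable.encode (segment I i).toFinset)

/-- The iterated evaluation of an iterative learner on a finite sequence:
start with the initial hypothesis `h(none)` and feed the data one by one. -/
def iterExtend (h : Learner) (σ : Seq) : Part ℕ :=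
  σ.foldl (fun pe a => pe.bind fun e => h (Encodable.encode (some (e, a))))
    (h (Encodable.encode (none : Option (ℕ × Datum))))

/-- Iterative interaction: `It(h,I)(i)` is obtained by feeding `I[i]` one datum
at a time, each time updating the previous hypothesis. -/
def Itop : InteractionOperator := fun h I i => iterExtend h (segment I i)

/-- An iterative learner is confluent if the order and multiplicity in which
the content is presented does not matter. -/
def ConfluentLearner (h : Learner) : Prop :=
  ∀ σ τ : Seq, contentS σ = contentS τ → iterExtend h σ = iterExtend h τ

/-- Confluently iterative interaction. -/
noncomputable def CflItop : InteractionOperator := fun h I i =>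
  if ConfluentLearner h then iterExtend h (segment I i) else Part.none

/-- `β ≼ β'`: every (partial computable) `β`-learner can be translated into a
`β'`-learner with the same hypothesis sequence on every informant. -/
def OpLe (β β' : InteractionOperator) : Prop :=
  ∀ h : Learner, Partrec h → ∃ h' : Learner, Partrec h' ∧
    ∀ I : Informant, IsInf I → ∀ n, β h I n = β' h' I n

/-! ### Learning restrictions -/

/-- The trivial restriction `T`. -/
def TT : Restriction := fun _ _ => True

/-- Explanatory identification. -/
def Ex : Restriction := fun p I =>
  ∃ q, W q = posI I ∧ ∀ᶠ n in atTop, p n = Part.some q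

/-- Behaviorally correct identification. -/
def Bc : Restriction := fun p I => ∀ᶠ n in atTop, ∃ e ∈ p n, W e = posI I

/-- Consistency of a hypothesis with a finite sequence of data. -/
def ConsH (e : ℕ) (σ : Seq) : Prop := posS σ ⊆ W e ∧ negS σ ∩ W e = ∅

/-- Consistency of a hypothesis sequence with an informant. -/
def Cons : Restriction := fun p I => ∀ n, ∃ e ∈ p n, ConsH e (segment I n)

/-- Strongly monotone. -/
def SMon : Restriction := fun p _ =>
  ∀ s t, s ≤ t → ∀ e ∈ p s, ∀ e' ∈ p t, W e ⊆ W e'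

/-- Dual strongly monotone. -/
def SMond : Restriction := fun p _ =>
  ∀ s t, s ≤ t → ∀ e ∈ p s, ∀ e' ∈ p t, W e' ⊆ W e

/-- Monotone. -/
def Mon : Restriction := fun p I =>
  ∀ s t, s ≤ t → ∀ e ∈ p s, ∀ e' ∈ p t, W e ∩ posI I ⊆ W e' ∩ posI I

/-- Dual monotone. -/
def Mond : Restriction := fun p I =>
  ∀ s t, s ≤ t → ∀ e ∈ p s, ∀ e' ∈ p t, (W e)ᶜ ∩ negI I ⊆ (W e')ᶜ ∩ negI I

/-- Weakly monotone. -/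
def WMon : Restriction := fun p I =>
  ∀ s t, s ≤ t → ∀ e ∈ p s, ConsH e (segment I t) → ∀ e' ∈ p t, W e ⊆ W e'

/-- Dual weakly monotone. -/
def WMond : Restriction := fun p I =>
  ∀ s t, s ≤ t → ∀ e ∈ p s, ConsH e (segment I t) → ∀ e' ∈ p t, W e' ⊆ W e

/-- Cautious. -/
def Caut : Restriction := fun p _ =>
  ∀ s t, s < t → ∀ e ∈ p s, ∀ e' ∈ p t, ¬ W e' ⊂ W e

/-- Target cautious. -/
def CautTar : Restriction := fun p I =>
  ∀ s, ∀ e ∈ p s, ¬ posI I ⊂ W e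

/-- Finitely cautious. -/
def CautFin : Restriction := fun p _ =>
  ∀ s t, s < t → ∀ e ∈ p s, ∀ e' ∈ p t, W e' ⊂ W e → (W e').Infinite

/-- Infinitely cautious. -/
def CautInf : Restriction := fun p _ =>
  ∀ s t, s < t → ∀ e ∈ p s, ∀ e' ∈ p t, W e' ⊂ W e → (W e').Finite

/-! ### Learnability -/

/-- The class of admissible learners: all partial computable learners. -/
def AllL : Learner → Prop := fun _ => True
/-- The class of admissible learners: total computable learners (`ℛ`). -/
def TotalL : Learner → Prop := fun h => ∀ x, (h x).Dom
/-- Admissible informants: all informants (`Inf`). -/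
def AllI : Informant → Prop := fun _ => True

/-- `h` learns `L` in the setting given by admissible informants `P`,
interaction operator `β` and local restriction `δ`. -/
def LearnsWith (P : Informant → Prop) (β : InteractionOperator) (δ : Restriction)
    (h : Learner) (L : Set ℕ) : Prop :=
  RE L ∧ ∀ I : Informant, P I → IsInformant I L → δ (β h I) I

/-- `[τ(α) C P β δ]`: the collection of all classes of languages learnable by
some learner in `C` that satisfies the global restriction `α` on all admissible
informants, under interaction operator `β` and local restriction `δ`. -/
def Learnable (α : Restriction) (C : Learner → Prop) (P : Informant → Prop)
    (β : InteractionOperator) (δ : Restriction) : Set (Set (Set ℕ)) :=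
  {𝓛 | ∃ h : Learner, Partrec h ∧ C h ∧
        (∀ I : Informant, IsInf I → P I → α (β h I) I) ∧
        ∀ L ∈ 𝓛, LearnsWith P β δ h L}

/-! ### Properties of restrictions -/

/-- A learning restriction is delayable if it is preserved under postponing
hypotheses along a non-decreasing unbounded function. -/
def Delayable (δ : Restriction) : Prop :=
  ∀ I I' : Informant, IsInf I → IsInf I' → Set.range I = Set.range I' →
    ∀ (p : HypSeq) (s : ℕ → ℕ), Monotone s → (∀ m, ∃ n, m ≤ s n) →
      δ p I → (∀ n, contentS (segment I (s n)) ⊆ contentS (segment I' n)) →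
      δ (fun n => p (s n)) I'

/-- A learning restriction is semantic if it is indifferent to replacing the
hypothesis sequence by a semantically equivalent one. -/
def Semantic (δ : Restriction) : Prop :=
  ∀ (p p' : HypSeq) (I : Informant), δ p I →
    (∀ i, (p i).Dom ↔ (p' i).Dom) →
    (∀ i, ∀ e ∈ p i, ∀ e' ∈ p' i, W e = W e') →
    δ p' I


/-! ### Encoding of finite sets of data -/

/-- Decode a number to a list of data (empty if it is not a code). -/
def toList (n : ℕ) : List Datum := (Encodable.decode (α := List Datum) n).getD []

/-- The encoding of a finite set is the encoding of a list of its elements. -/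
theorem encode_finset_spec (s : Finset Datum) :
    ((toList (Encodable.encode s) : List Datum) : Multiset Datum)
      = s.val := by
  have h1 : Encodable.encode s = Encodable.encode s.val := rfl
  rw [h1]
  have h2 : Encodable.decode (α := Multiset Datum) (Encodable.encode s.val) = some s.val :=
    Encodable.encodek _
  have h3 : Encodable.decode (α := Multiset Datum) (Encodable.encode s.val)
      = ((↑) : List Datum → Multiset Datum) <$>
        Encodable.decode (α := List Datum) (Encodable.encode s.val) := rfl
  rw [h3] at h2
  unfold toList
  cases hd : Encodable.decode (α := List Datum) (Encodable.encode s.val) with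
  | none => rw [hd] at h2; simp at h2
  | some l => rw [hd] at h2; simpa using h2

theorem sort_eq_self {α : Type*} (r : α → α → Prop) {_ : DecidableRel r} {_ : IsTrans α r}
    {_ : Std.Antisymm r} {_ : Std.Total r} (l : List α) (h : l.Pairwise r) :
    (l : Multiset α).sort r = l := by
  rw [Multiset.coe_sort]
  exact List.mergeSort_eq_self _ (by simpa using h)

/-- A list that is strictly sorted by codes encodes its own content. -/
theorem encode_toFinset_sorted (l : List Datum)
    (h : l.Pairwise fun a b => Encodable.encode a < Encodable.encode b) :
    Encodable.encode l.toFinset = Encodable.encode l := by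
  have hn : l.Nodup := h.imp (by rintro a b hab rfl; exact lt_irrefl _ hab)
  have h1 : Encodable.encode l.toFinset = Encodable.encode l.toFinset.val := rfl
  rw [h1, List.toFinset_val, hn.dedup]
  change encodeMultiset _ = _
  unfold encodeMultiset
  congr 1
  apply sort_eq_self
  exact h.imp (fun hab => le_of_lt hab)

theorem encode_datum_lt {x y : ℕ} (h : x < y) (b c : Bool) :
    Encodable.encode ((x, b) : Datum) < Encodable.encode ((y, c) : Datum) := by
  have hb : Encodable.encode b ≤ 1 := by cases b <;> simp
  rw [Encodable.encode_prod_val, Encodable.encode_prod_val]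
  simp only [Encodable.encode_nat]
  generalize Encodable.encode b = b' at *
  have h1 : Nat.pair x b' < Nat.pair y 0 := by
    unfold Nat.pair
    have : y ≥ x + 1 := h
    split_ifs <;> nlinarith
  refine h1.trans_le ?_
  rcases Nat.eq_zero_or_pos (Encodable.encode c) with h0 | h0
  · rw [h0]
  · exact (Nat.pair_lt_pair_right _ h0).le

theorem Canonical.fst {I : Informant} (hI : Canonical I) (x : ℕ) : (I x).1 = x := by
  rcases hI x with h | h <;> rw [h]

theorem Gop_eq_Sdop (h : Learner) {I : Informant} (hI : Canonical I) :
    Gop h I = Sdop h I := by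
  funext n
  unfold Gop Sdop
  rw [encode_toFinset_sorted]
  unfold segment
  rw [List.pairwise_map]
  refine List.pairwise_lt_range.imp ?_
  intro a b hab
  have ha : I a = (a, (I a).2) := Prod.ext (hI.fst a) rfl
  have hb : I b = (b, (I b).2) := Prod.ext (hI.fst b) rfl
  rw [ha, hb]
  exact encode_datum_lt hab _ _

/-! ### Extracting the longest canonical initial segment from a set of data -/

/-- All `x < m` are decided by `l`. -/
def Dec (l : List Datum) (m : ℕ) : Prop := ∀ x < m, ∃ a ∈ l, a.1 = x

/-- Length of the longest canonical segment contained in `l`. -/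
noncomputable def len (l : List Datum) : ℕ := Nat.findGreatest (Dec l) l.length

/-- The canonical segment of length `len l`. -/
noncomputable def can (l : List Datum) : List Datum :=
  (List.range (len l)).map fun x => (x, decide ((x, true) ∈ l))

theorem primrec_Dec : PrimrecRel Dec := by
  have h1 : PrimrecRel fun (a : Datum) (x : ℕ) => a.1 = x :=
    Primrec.eq.comp (Primrec.fst.comp Primrec.fst) Primrec.snd
  have h2 : PrimrecRel fun (l : List Datum) (x : ℕ) => ∃ a ∈ l, a.1 = x := h1.exists_mem_list
  have h3 : PrimrecRel fun (x : ℕ) (l : List Datum) => ∃ a ∈ l, a.1 = x :=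
    h2.comp Primrec.snd Primrec.fst
  have h4 := (h3.forall_mem_list.comp (Primrec.list_range.comp Primrec.snd) Primrec.fst :
    PrimrecRel fun (l : List Datum) (m : ℕ) => ∀ x ∈ List.range m, ∃ a ∈ l, a.1 = x)
  exact h4.of_eq (by simp [Dec])

theorem primrec_len : Primrec len :=
  Primrec.nat_findGreatest Primrec.list_length primrec_Dec

theorem primrec_can : Primrec can := by
  refine Primrec.list_map (Primrec.list_range.comp primrec_len) ?_
  have h1 : PrimrecRel fun (a : Datum) (x : Datum) => a = x :=  Primrec.eq
  have h2 : PrimrecRel fun (l : List Datum) (x : Datum) => ∃ a ∈ l, a = x := h1.exists_mem_list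
  have h3 : PrimrecRel fun (l : List Datum) (x : ℕ) => ∃ a ∈ l, a = (x, true) :=
    h2.comp Primrec.fst (Primrec.pair Primrec.snd (Primrec.const true))
  have h4 := h3.decide
  refine Primrec₂.pair.comp₂ Primrec₂.right (h4.of_eq ?_)
  intro l x
  simp

/-- The set-driven learner built from `h`. -/
noncomputable def sdOf (h : Learner) : Learner := fun n =>
  h (Encodable.encode (can (toList n)))

theorem partrec_sdOf {h : Learner} (hh : Partrec h) : Partrec (sdOf h) := by
  have : Primrec fun n : ℕ => Encodable.encode (can (toList n)) :=
    Primrec.encode.comp (primrec_can.comp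
      (Primrec.option_getD.comp Primrec.decode (Primrec.const [])))
  exact hh.comp this.to_comp

/-- The canonical informant of a language. -/
noncomputable def canI (L : Set ℕ) : Informant := fun x => (x, decide (x ∈ L))

theorem canI_canonical (L : Set ℕ) : Canonical (canI L) := by
  intro x
  by_cases h : x ∈ L <;> simp [canI, h]

theorem canI_informant (L : Set ℕ) : IsInformant (canI L) L := by
  constructor <;> ext x <;> simp [posI, negI, canI]

theorem IsInformant.isInf {I : Informant} {L : Set ℕ} (h : IsInformant I L) : IsInf I := by
  obtain ⟨rfl, h2⟩ := h
  exact ⟨rfl, h2⟩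

theorem IsInformant.mem_range {I : Informant} {L : Set ℕ} (h : IsInformant I L)
    (x : ℕ) (b : Bool) : (x, b) ∈ Set.range I ↔ b = decide (x ∈ L) := by
  obtain ⟨h1, h2⟩ := h
  cases b
  · have : x ∈ negI I ↔ x ∈ Lᶜ := by rw [h2]
    simpa [negI] using this
  · have : x ∈ posI I ↔ x ∈ L := by rw [h1]
    simpa [posI] using this

/-- The list of data read off the code of the content of `I[n]`. -/
noncomputable def lst (I : Informant) (n : ℕ) : List Datum :=
  toList (Encodable.encode (segment I n).toFinset)

theorem mem_lst (I : Informant) (n : ℕ) (a : Datum) : a ∈ lst I n ↔ a ∈ segment I n := by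
  have := encode_finset_spec (segment I n).toFinset
  rw [← List.mem_toFinset (l := segment I n), Finset.mem_def, ← this]
  rfl

theorem length_lst (I : Informant) (n : ℕ) :
    (lst I n).length = (segment I n).toFinset.card := by
  have := encode_finset_spec (segment I n).toFinset
  rw [Finset.card_def, ← this]
  rfl

theorem mem_segment (I : Informant) (n : ℕ) (a : Datum) :
    a ∈ segment I n ↔ ∃ i < n, I i = a := by
  simp [segment]

theorem dec_len (l : List Datum) : Dec l (len l) :=
  Nat.findGreatest_spec (P := Dec l) (Nat.zero_le _) (by intro x hx; omega)

theorem len_mono (I : Informant) : Monotone fun n => len (lst I n) := by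
  intro m n hmn
  have hsub : ∀ a, a ∈ segment I m → a ∈ segment I n := by
    intro a
    rw [mem_segment, mem_segment]
    rintro ⟨i, hi, h⟩
    exact ⟨i, hi.trans_le hmn, h⟩
  apply Nat.findGreatest_mono
  · intro k hk x hx
    obtain ⟨a, ha, h⟩ := hk x hx
    exact ⟨a, (mem_lst _ _ _).2 (hsub a ((mem_lst _ _ _).1 ha)), h⟩
  · rw [length_lst, length_lst]
    apply Finset.card_le_card
    intro a
    simpa using hsub a

theorem len_unbounded {I : Informant} {L : Set ℕ} (hI : IsInformant I L) (m : ℕ) :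
    ∃ n, m ≤ len (lst I n) := by
  have hd : ∃ n, Dec (lst I n) m := by
    have : ∀ x, ∃ i, (I i).1 = x := by
      intro x
      obtain ⟨i, hi⟩ := (hI.mem_range x _).2 rfl
      exact ⟨i, by rw [hi]⟩
    choose f hf using this
    refine ⟨(Finset.range m).sup f + 1, fun x hx => ⟨I (f x), ?_, hf x⟩⟩
    rw [mem_lst, mem_segment]
    exact ⟨f x, Nat.lt_succ_of_le (Finset.le_sup (f := f) (Finset.mem_range.2 hx)), rfl⟩
  obtain ⟨n, hn⟩ := hd
  refine ⟨n, Nat.le_findGreatest ?_ hn⟩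
  have hs : Finset.range m ⊆ (lst I n).toFinset.image Prod.fst := by
    intro x hx
    obtain ⟨a, ha, h⟩ := hn x (Finset.mem_range.1 hx)
    exact Finset.mem_image.2 ⟨a, List.mem_toFinset.2 ha, h⟩
  calc m = (Finset.range m).card := by simp
    _ ≤ _ := Finset.card_le_card hs
    _ ≤ _ := Finset.card_image_le
    _ ≤ _ := List.toFinset_card_le _

theorem mem_lst_of_lt {I : Informant} {L : Set ℕ} (hI : IsInformant I L) {n x : ℕ}
    (hx : x < len (lst I n)) : canI L x ∈ lst I n := by
  obtain ⟨⟨y, b⟩, ha, rfl⟩ := dec_len (lst I n) x hx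
  obtain ⟨i, _, hi⟩ := (mem_segment _ _ _).1 ((mem_lst _ _ _).1 ha)
  have := (hI.mem_range y b).1 ⟨i, hi⟩
  subst this
  exact ha

theorem can_eq {I : Informant} {L : Set ℕ} (hI : IsInformant I L) (n : ℕ) :
    can (lst I n) = segment (canI L) (len (lst I n)) := by
  unfold can segment
  apply List.map_congr_left
  intro x hx
  have h1 := mem_lst_of_lt hI (List.mem_range.1 hx)
  have h2 : (x, true) ∈ lst I n ↔ x ∈ L := by
    constructor
    · intro h
      obtain ⟨i, _, hi⟩ := (mem_segment _ _ _).1 ((mem_lst _ _ _).1 h)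
      simpa using (hI.mem_range x true).1 ⟨i, hi⟩
    · intro h
      simpa [canI, h] using h1
  simp [canI, h2]

/-- For every delayable learning restriction `δ`,
`[Inf_can G δ] = [Inf Sd δ]`. -/
theorem canonical_G_eq_Sd_of_delayable (δ : Restriction) (hδ : Delayable δ) :
    Learnable TT AllL Canonical Gop δ = Learnable TT AllL AllI Sdop δ := by
  ext 𝓛
  constructor
  · rintro ⟨h, hh, _, _, hl⟩
    refine ⟨sdOf h, partrec_sdOf hh, trivial, fun _ _ _ => trivial, fun L hL => ?_⟩
    obtain ⟨hre, hl⟩ := hl L hL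
    refine ⟨hre, fun I _ hI => ?_⟩
    have h1 := hl (canI L) (canI_canonical L) (canI_informant L)
    have hr : Set.range (canI L) = Set.range I := by
      ext ⟨x, b⟩
      rw [(canI_informant L).mem_range, hI.mem_range]
    have h2 := hδ (canI L) I (canI_informant L).isInf hI.isInf hr (Gop h (canI L))
      (fun n => len (lst I n)) (len_mono I) (len_unbounded hI) h1 ?_
    · have h3 : Sdop (sdOf h) I = fun n => Gop h (canI L) (len (lst I n)) := by
        funext n
        unfold Gop
        rw [← can_eq hI]
        rfl
      rw [h3]
      exact h2
    · intro n a ha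
      obtain ⟨x, hx, rfl⟩ := (mem_segment _ _ _).1 ha
      exact (mem_lst _ _ _).1 (mem_lst_of_lt hI hx)
  · rintro ⟨h, hh, _, _, hl⟩
    refine ⟨h, hh, trivial, fun _ _ _ => trivial, fun L hL => ?_⟩
    obtain ⟨hre, hl⟩ := hl L hL
    refine ⟨hre, fun I hc hI => ?_⟩
    rw [Gop_eq_Sdop h hc]
    exact hl I trivial hI

end InfBc
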